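/- Let (f_N)_{N∈ℕ} be probability measures on ℝ² whose Fourier transforms can be written as f̂_N(ξ_1,ξ_2) = F_N(ξ)·exp(−(ξ_1²+ξ_2²)/2 − ξ_1ξ_2κ_N) for some functions F_N : ℝ² → ℂ and constants κ_N ∈ [0,1] satisfying κ := limsup_{N→∞} κ_N < 1. Let R > 0 and χ ∈ L¹(ℝ,ℝ) with supp(χ̂) ⊆ [−R,R]; let γ > 0 and γ_1 = γ_1(N), γ_2 = γ_2(N) be numbers with γ_1, γ_2 > γ, and set φ_j := (x ↦ e^{−γ_j x}·1{x ≥ 0}) ⋆ χ for j = 1,2. Then for any sequence of strictly positive finite numbers σ_N: limsup_{N→∞} | ∫_{ℝ²} σ_N² φ_1(σ_N u_1) φ_2(σ_N u_2) f_N(du) | ≤ (1/(2πγ²))·‖χ̂‖_∞²·(1−κ²)^{−1/2}·sup_{N≥1} ‖F_N‖_{∞,[−Rσ_N,Rσ_N]²}. -/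

import Mathlib

open MeasureTheory Filter Set
open scoped BigOperators Classical

noncomputable section

/-!
Replacing `φ` by `x ↦ σ φ(σ x)` widens the frequency band of `φ` by the factor `σ` but keeps the
supremum of its Fourier transform, so the scales never enter the bound. Fourier inversion and
Fubini turn the integral of `φ₁ ⊗ φ₂` against the measure into an integral of `φ̂₁ ⊗ φ̂₂` against
the Fourier transform of the measure over the square `[-Rσ, Rσ]²`. There `|φ̂ⱼ| ≤ ‖χ̂‖_∞ / γ`,
because the cutoff has mass `1 / γⱼ`, and the Fourier transform of the measure is dominated by a
multiple of a Gaussian with total integral `2π / √(1 - κ²)`. As `k ↦ 1 / √(1 - k²)` is increasing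
and continuous on `[0, 1)`, the bound survives the passage to the limit superior.
-/

section BoundedConvolution

open scoped Convolution

variable {𝕜 G E E' F : Type*} [NontriviallyNormedField 𝕜]
  [NormedAddCommGroup E] [NormedSpace 𝕜 E] [NormedAddCommGroup E'] [NormedSpace 𝕜 E']
  [NormedAddCommGroup F] [NormedSpace 𝕜 F]
  [AddCommGroup G] [MeasurableSpace G] {μ : Measure G} [μ.IsAddLeftInvariant] [μ.IsNegInvariant]
  {f : G → E} {g : G → E'} {C : ℝ}

lemma convolutionExistsAt_of_bounded_of_integrable [MeasurableAdd₂ G] [MeasurableNeg G]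
    [SFinite μ] (L : E →L[𝕜] E' →L[𝕜] F) (hf : AEStronglyMeasurable f μ)
    (hfC : ∀ᵐ t ∂μ, ‖f t‖ ≤ C) (hg : Integrable g μ) (x : G) :
    ConvolutionExistsAt f g x L μ :=
  ((hg.comp_sub_left x).norm.const_mul (‖L‖ * C)).mono'
    (hf.convolution_integrand_snd L hg.aestronglyMeasurable x)
    (hfC.mono fun _ ht => L.le_of_opNorm₂_le_of_le le_rfl ht le_rfl)

variable [NormedSpace ℝ F]

lemma norm_convolution_le_of_bounded [MeasurableAdd G] [MeasurableNeg G]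
    (L : E →L[𝕜] E' →L[𝕜] F) (hfC : ∀ᵐ t ∂μ, ‖f t‖ ≤ C) (hg : Integrable g μ) (x : G) :
    ‖(f ⋆[L, μ] g) x‖ ≤ ‖L‖ * C * ∫ t, ‖g t‖ ∂μ := by
  calc ‖(f ⋆[L, μ] g) x‖ ≤ ∫ t, ‖L‖ * C * ‖g (x - t)‖ ∂μ :=
        norm_integral_le_of_norm_le ((hg.comp_sub_left x).norm.const_mul _)
          (hfC.mono fun _ ht => L.le_of_opNorm₂_le_of_le le_rfl ht le_rfl)
    _ = ‖L‖ * C * ∫ t, ‖g t‖ ∂μ := by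
        rw [integral_const_mul, integral_sub_left_eq_self (fun t => ‖g t‖) μ x]

-- Approximating `g` in `L¹` by compactly supported continuous functions exhibits the convolution
-- as a uniform limit of continuous functions.
lemma continuous_convolution_of_bounded_of_integrable [TopologicalSpace G]
    [IsTopologicalAddGroup G] [LocallyCompactSpace G] [SecondCountableTopology G] [BorelSpace G]
    [μ.Regular] [NormedSpace ℝ E'] (L : E →L[𝕜] E' →L[𝕜] F) (hf : AEStronglyMeasurable f μ)
    (hfC : ∀ᵐ t ∂μ, ‖f t‖ ≤ C) (hg : Integrable g μ) : Continuous (f ⋆[L, μ] g) := by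
  have hf_loc : LocallyIntegrable f μ :=
    (memLp_top_of_bound hf C hfC).locallyIntegrable le_top
  refine continuous_of_uniform_approx_of_continuous fun u hu => ?_
  obtain ⟨ε, hε, hεu⟩ := Metric.mem_uniformity_dist.1 hu
  obtain ⟨δ, hδ, hδε⟩ := exists_pos_mul_lt hε (|‖L‖ * C|)
  obtain ⟨h, hh_supp, hh_dist, hh_cont, hh⟩ := hg.exists_hasCompactSupport_integral_sub_le hδ
  refine ⟨f ⋆[L, μ] h, hh_supp.continuous_convolution_right L hf_loc hh_cont, fun x => hεu ?_⟩
  have hsub : (f ⋆[L, μ] (g - h)) x + (f ⋆[L, μ] h) x = (f ⋆[L, μ] g) x := by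
    rw [← ConvolutionExistsAt.distrib_add
      (convolutionExistsAt_of_bounded_of_integrable L hf hfC (hg.sub hh) x)
      (convolutionExistsAt_of_bounded_of_integrable L hf hfC hh x), sub_add_cancel]
  calc dist ((f ⋆[L, μ] g) x) ((f ⋆[L, μ] h) x)
      = ‖(f ⋆[L, μ] (g - h)) x‖ := by rw [dist_eq_norm, ← hsub, add_sub_cancel_right]
    _ ≤ ‖L‖ * C * ∫ t, ‖(g - h) t‖ ∂μ := norm_convolution_le_of_bounded L hfC (hg.sub hh) x
    _ ≤ |‖L‖ * C| * δ := mul_le_mul (le_abs_self _) hh_dist (by positivity) (abs_nonneg _)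
    _ < ε := hδε

end BoundedConvolution

section GaussianIntegral

/-- Half the quadratic form of the covariance matrix with unit variances and correlation `k`, so
that `exp (-halfCovForm k ξ)` is the characteristic function of that Gaussian law on the plane. -/
def halfCovForm (k : ℝ) (ξ : ℝ × ℝ) : ℝ :=
  (ξ.1 ^ 2 + ξ.2 ^ 2) / 2 + ξ.1 * ξ.2 * k

variable {k : ℝ}

lemma halfCovForm_ge (k : ℝ) (ξ : ℝ × ℝ) :
    (1 - |k|) / 2 * ξ.1 ^ 2 + (1 - |k|) / 2 * ξ.2 ^ 2 ≤ halfCovForm k ξ := by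
  have : |ξ.1 * ξ.2 * k| ≤ (ξ.1 ^ 2 + ξ.2 ^ 2) / 2 * |k| := by
    rw [abs_mul]
    gcongr
    rw [abs_mul]
    nlinarith [sq_nonneg (|ξ.1| - |ξ.2|), sq_abs ξ.1, sq_abs ξ.2]
  unfold halfCovForm
  linarith [neg_abs_le (ξ.1 * ξ.2 * k)]

lemma integrable_exp_neg_halfCovForm (hk : |k| < 1) :
    Integrable fun ξ => Real.exp (-halfCovForm k ξ) := by
  have hpos : 0 < (1 - |k|) / 2 := by linarith
  have hprod := (integrable_exp_neg_mul_sq hpos).mul_prod (integrable_exp_neg_mul_sq hpos)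
  refine hprod.mono' (by unfold halfCovForm; fun_prop) (Eventually.of_forall fun ξ => ?_)
  rw [Real.norm_of_nonneg (Real.exp_nonneg _), ← Real.exp_add, Real.exp_le_exp]
  linarith [halfCovForm_ge k ξ]

-- Completing the square in the first variable.
lemma integral_exp_neg_halfCovForm_fst (k y : ℝ) :
    ∫ x, Real.exp (-halfCovForm k (x, y)) =
      √(2 * Real.pi) * Real.exp (-((1 - k ^ 2) / 2) * y ^ 2) := by
  have hgauss : ∫ x : ℝ, Real.exp (-(1 / 2) * x ^ 2) = √(2 * Real.pi) := by
    rw [integral_gaussian]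
    congr 1
    ring
  rw [← hgauss, ← integral_add_right_eq_self _ (-(k * y)), ← integral_mul_const]
  congr 1 with x
  rw [← Real.exp_add]
  congr 1
  simp only [halfCovForm]
  ring

lemma integral_exp_neg_halfCovForm (hk : |k| < 1) :
    ∫ ξ, Real.exp (-halfCovForm k ξ) = 2 * Real.pi / √(1 - k ^ 2) := by
  have hpos : 0 < 1 - k ^ 2 := sub_pos.2 ((sq_lt_one_iff_abs_lt_one k).2 hk)
  have hint := integrable_exp_neg_halfCovForm hk
  rw [Measure.volume_eq_prod] at hint ⊢
  rw [integral_prod_symm _ hint]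
  simp only [integral_exp_neg_halfCovForm_fst]
  rw [integral_const_mul, integral_gaussian, ← Real.sqrt_mul (by positivity),
    show 2 * Real.pi * (Real.pi / ((1 - k ^ 2) / 2)) = (2 * Real.pi) ^ 2 / (1 - k ^ 2) by
      field_simp,
    Real.sqrt_div (by positivity), Real.sqrt_sq (by positivity)]

lemma integral_exp_neg_halfCovForm_smul (hk : |k| < 1) (c : ℝ) :
    ∫ ξ : ℝ × ℝ, Real.exp (-halfCovForm k (c • ξ)) =
      (c ^ 2)⁻¹ * (2 * Real.pi / √(1 - k ^ 2)) := by
  rw [Measure.integral_comp_smul volume (fun ξ => Real.exp (-halfCovForm k ξ)) c,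
    integral_exp_neg_halfCovForm hk, Module.finrank_prod, Module.finrank_self, one_add_one_eq_two,
    smul_eq_mul, abs_of_nonneg (by positivity)]

end GaussianIntegral

section BandLimited

open scoped FourierTransform Convolution

/-- Continuous integrable functions whose Fourier transform is bounded by `B` and supported in
the angular frequencies `[-R, R]`. Mathlib's `𝓕` uses ordinary frequencies `w`, hence `2πw`. -/
structure IsBandLimited (φ : ℝ → ℂ) (R B : ℝ) : Prop where
  continuous : Continuous φ
  integrable : Integrable φ
  norm_fourier_le : ∀ w, ‖𝓕 φ w‖ ≤ B
  fourier_eq_zero : ∀ w, R < |2 * Real.pi * w| → 𝓕 φ w = 0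

lemma continuous_fourier {f : ℝ → ℂ} (hf : Integrable f) : Continuous (𝓕 f) :=
  VectorFourier.fourierIntegral_continuous Real.continuous_fourierChar
    (innerSL ℝ).continuous₂ hf

lemma norm_fourier_le_integral_norm (f : ℝ → ℂ) (w : ℝ) : ‖𝓕 f w‖ ≤ ∫ x, ‖f x‖ :=
  VectorFourier.norm_fourierIntegral_le_integral_norm _ _ _ _ _

lemma fourier_comp_mul_left {s : ℝ} (hs : 0 < s) (f : ℝ → ℂ) (w : ℝ) :
    𝓕 (fun x => s * f (s * x)) w = 𝓕 f (w / s) := by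
  have hs' : (s : ℂ) ≠ 0 := by exact_mod_cast hs.ne'
  calc 𝓕 (fun x => s * f (s * x)) w
      = ∫ x : ℝ, s * (Real.fourierChar (-(s * x * (w / s))) • f (s * x)) := by
        rw [Real.fourier_real_eq]
        congr 1 with x
        rw [mul_smul_comm]
        congr 3
        field_simp
    _ = 𝓕 f (w / s) := by
        rw [integral_const_mul, Real.fourier_real_eq,
          Measure.integral_comp_mul_left (fun x => Real.fourierChar (-(x * (w / s))) • f x) s,
          abs_of_pos (inv_pos.2 hs), Complex.real_smul, Complex.ofReal_inv,
          mul_inv_cancel_left₀ hs']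

lemma fourier_ofReal_eq_integral_exp (χ : ℝ → ℝ) (w : ℝ) :
    𝓕 (fun x => (χ x : ℂ)) w =
      ∫ x : ℝ, (χ x : ℂ) * Complex.exp (-(Complex.I * ((2 * Real.pi * w : ℝ) : ℂ) * x)) := by
  rw [Real.fourier_real_eq_integral_exp_smul]
  congr 1 with x
  rw [smul_eq_mul, mul_comm]
  congr 2
  push_cast
  ring

namespace IsBandLimited

variable {φ : ℝ → ℂ} {R B : ℝ}

lemma bound_nonneg (hφ : IsBandLimited φ R B) : 0 ≤ B :=
  (norm_nonneg _).trans (hφ.norm_fourier_le 0)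

lemma integrable_fourier (hφ : IsBandLimited φ R B) : Integrable (𝓕 φ) := by
  refine (continuous_fourier hφ.integrable).integrable_of_hasCompactSupport
    (.intro (isCompact_closedBall 0 (R / (2 * Real.pi))) fun w hw => hφ.fourier_eq_zero w ?_)
  rw [mem_closedBall_zero_iff, not_le, Real.norm_eq_abs, div_lt_iff₀' Real.two_pi_pos] at hw
  rwa [abs_mul, abs_of_pos Real.two_pi_pos]

lemma fourierInv_fourier_eq (hφ : IsBandLimited φ R B) : 𝓕⁻ (𝓕 φ) = φ :=
  hφ.continuous.fourierInv_fourier_eq hφ.integrable hφ.integrable_fourier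

lemma comp_mul_left (hφ : IsBandLimited φ R B) {s : ℝ} (hs : 0 < s) :
    IsBandLimited (fun x => s * φ (s * x)) (R * s) B where
  continuous := by have := hφ.continuous; fun_prop
  integrable := (hφ.integrable.comp_mul_left' hs.ne').const_mul _
  norm_fourier_le w := by
    rw [fourier_comp_mul_left hs]
    exact hφ.norm_fourier_le _
  fourier_eq_zero w hw := by
    rw [fourier_comp_mul_left hs]
    apply hφ.fourier_eq_zero
    rwa [← mul_div_assoc, abs_div, abs_of_pos hs, lt_div_iff₀ hs]

end IsBandLimited

lemma isBandLimited_convolution {g χ : ℝ → ℂ} {A C M R : ℝ} (hg : Integrable g)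
    (hgC : ∀ x, ‖g x‖ ≤ C) (hgA : ∫ x, ‖g x‖ ≤ A) (hχ : Integrable χ)
    (hχM : ∀ w, ‖𝓕 χ w‖ ≤ M) (hχR : ∀ w, R < |2 * Real.pi * w| → 𝓕 χ w = 0) :
    IsBandLimited (g ⋆[ContinuousLinearMap.mul ℂ ℂ] χ) R (A * M) where
  continuous := continuous_convolution_of_bounded_of_integrable _ hg.aestronglyMeasurable
    (Eventually.of_forall hgC) hχ
  integrable := hg.integrable_convolution _ hχ
  norm_fourier_le w := by
    rw [Real.fourier_mul_convolution_eq hg hχ, norm_mul]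
    have hgw := (norm_fourier_le_integral_norm g w).trans hgA
    exact mul_le_mul hgw (hχM w) (norm_nonneg _) ((norm_nonneg _).trans hgw)
  fourier_eq_zero w hw := by rw [Real.fourier_mul_convolution_eq hg hχ, hχR w hw, mul_zero]

lemma isBandLimited_ofReal_convolution {g χ : ℝ → ℝ} {A C M R : ℝ} (hg : Integrable g)
    (hgC : ∀ x, |g x| ≤ C) (hgA : ∫ x, |g x| ≤ A) (hχ : Integrable χ)
    (hχM : ∀ t : ℝ, ‖∫ x : ℝ, (χ x : ℂ) * Complex.exp (-(Complex.I * t * x))‖ ≤ M)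
    (hχR : ∀ t : ℝ, R < |t| →
      (∫ x : ℝ, (χ x : ℂ) * Complex.exp (-(Complex.I * t * x))) = 0) :
    IsBandLimited (fun x => ((∫ y, g y * χ (x - y) : ℝ) : ℂ)) R (A * M) := by
  have hconv : IsBandLimited
      ((fun x => (g x : ℂ)) ⋆[ContinuousLinearMap.mul ℂ ℂ] fun x => (χ x : ℂ)) R (A * M) := by
    refine isBandLimited_convolution (g := fun x => (g x : ℂ)) (χ := fun x => (χ x : ℂ)) (C := C)
      hg.ofReal ?_ ?_ hχ.ofReal ?_ ?_
    · simpa only [Complex.norm_real, Real.norm_eq_abs] using hgC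
    · simpa only [Complex.norm_real, Real.norm_eq_abs] using hgA
    · simpa only [fourier_ofReal_eq_integral_exp] using fun w => hχM _
    · simpa only [fourier_ofReal_eq_integral_exp] using fun w hw => hχR _ hw
  convert! hconv using 2 with x
  rw [← integral_complex_ofReal]
  simp only [convolution, ContinuousLinearMap.mul_apply', Complex.ofReal_mul]

end BandLimited

section ExponentialCutoff

/-- The one-sided exponential `y ↦ e^{-ay} 1_{y ≥ 0}` that is mollified in the theorem. -/
def expCutoff (a y : ℝ) : ℝ := if 0 ≤ y then Real.exp (-(a * y)) else 0

variable {a : ℝ}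

lemma expCutoff_eq_indicator (a : ℝ) :
    expCutoff a = (Ici 0).indicator fun y => Real.exp (-a * y) := by
  ext y
  simp only [expCutoff, indicator, mem_Ici, neg_mul]

lemma expCutoff_nonneg (a y : ℝ) : 0 ≤ expCutoff a y := by
  unfold expCutoff
  split_ifs <;> positivity

lemma expCutoff_le_one (ha : 0 ≤ a) (y : ℝ) : expCutoff a y ≤ 1 := by
  unfold expCutoff
  split_ifs with hy
  · exact Real.exp_le_one_iff.2 (neg_nonpos.2 (mul_nonneg ha hy))
  · exact zero_le_one

lemma integrable_expCutoff (ha : 0 < a) : Integrable (expCutoff a) := by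
  rw [expCutoff_eq_indicator, integrable_indicator_iff measurableSet_Ici,
    integrableOn_Ici_iff_integrableOn_Ioi]
  exact integrableOn_exp_mul_Ioi (neg_lt_zero.2 ha) 0

lemma integral_expCutoff (ha : 0 < a) : ∫ y, expCutoff a y = 1 / a := by
  rw [expCutoff_eq_indicator, integral_indicator measurableSet_Ici, integral_Ici_eq_integral_Ioi,
    integral_exp_mul_Ioi (neg_lt_zero.2 ha), mul_zero, Real.exp_zero, neg_div_neg_eq]

lemma isBandLimited_expCutoff_convolution {χ : ℝ → ℝ} {R M γ : ℝ} (hγ : 0 < γ) (ha : γ ≤ a)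
    (hχ : Integrable χ)
    (hχM : ∀ t : ℝ, ‖∫ x : ℝ, (χ x : ℂ) * Complex.exp (-(Complex.I * t * x))‖ ≤ M)
    (hχR : ∀ t : ℝ, R < |t| →
      (∫ x : ℝ, (χ x : ℂ) * Complex.exp (-(Complex.I * t * x))) = 0) :
    IsBandLimited (fun x => ((∫ y, expCutoff a y * χ (x - y) : ℝ) : ℂ)) R (M / γ) := by
  have ha0 : 0 < a := hγ.trans_le ha
  rw [div_eq_inv_mul]
  refine isBandLimited_ofReal_convolution (C := 1) (integrable_expCutoff ha0) ?_ ?_ hχ hχM hχR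
  · simpa only [abs_of_nonneg (expCutoff_nonneg a _)] using expCutoff_le_one ha0.le
  · simpa only [abs_of_nonneg (expCutoff_nonneg a _), integral_expCutoff ha0, one_div] using
      inv_anti₀ hγ ha

end ExponentialCutoff

section PlanarParseval

open scoped FourierTransform

variable {μ : Measure (ℝ × ℝ)} [IsFiniteMeasure μ]

/-- The Fourier transform of a measure on the plane, with the kernel `e^{-iξ·u}`. -/
def planeFourier (μ : Measure (ℝ × ℝ)) (ξ : ℝ × ℝ) : ℂ :=
  ∫ u, Complex.exp (-(Complex.I * (ξ.1 * u.1 + ξ.2 * u.2))) ∂μ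

lemma integral_fourierInv_mul_fourierInv {f g : ℝ → ℂ} (hf : Integrable f) (hg : Integrable g) :
    ∫ u, 𝓕⁻ f u.1 * 𝓕⁻ g u.2 ∂μ =
      ∫ w : ℝ × ℝ, f w.1 * g w.2 * planeFourier μ (-(2 * Real.pi) • w) := by
  let e (u w : ℝ × ℝ) : ℂ :=
    Complex.exp (((2 * Real.pi * (u.1 * w.1 + u.2 * w.2) : ℝ) : ℂ) * Complex.I)
  have hprod (u : ℝ × ℝ) : 𝓕⁻ f u.1 * 𝓕⁻ g u.2 = ∫ w : ℝ × ℝ, f w.1 * g w.2 * e u w := by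
    rw [Real.fourierInv_eq', Real.fourierInv_eq', ← integral_prod_mul, ← Measure.volume_eq_prod]
    congr 1 with w
    simp only [e, smul_eq_mul, RCLike.inner_apply, conj_trivial, mul_add,
      Complex.ofReal_add, add_mul, Complex.exp_add]
    ring
  have hint : Integrable (Function.uncurry fun u w : ℝ × ℝ => f w.1 * g w.2 * e u w)
      (μ.prod volume) := by
    have hfg : Integrable (fun p : (ℝ × ℝ) × (ℝ × ℝ) => f p.2.1 * g p.2.2) (μ.prod volume) :=
      (hf.mul_prod hg).comp_snd μ
    exact hfg.mul_bdd (c := 1) (by unfold e; fun_prop)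
      (Eventually.of_forall fun p => (Complex.norm_exp_ofReal_mul_I _).le)
  have hmeasure (w : ℝ × ℝ) : ∫ u, e u w ∂μ = planeFourier μ (-(2 * Real.pi) • w) := by
    unfold planeFourier e
    congr 1 with u
    congr 1
    simp only [Prod.smul_fst, Prod.smul_snd, smul_eq_mul]
    push_cast
    ring
  simp only [hprod, integral_integral_swap hint, integral_const_mul, hmeasure]

end PlanarParseval

section GaussianMajorant

open scoped FourierTransform

lemma norm_integral_mul_le_of_norm_planeFourier_le {μ : Measure (ℝ × ℝ)} [IsFiniteMeasure μ]
    {φ₁ φ₂ : ℝ → ℂ} {R B₁ B₂ M k : ℝ} (hφ₁ : IsBandLimited φ₁ R B₁) (hφ₂ : IsBandLimited φ₂ R B₂)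
    (hk : |k| < 1) (hM : 0 ≤ M)
    (hμ : ∀ ξ : ℝ × ℝ, |ξ.1| ≤ R → |ξ.2| ≤ R →
      ‖planeFourier μ ξ‖ ≤ M * Real.exp (-halfCovForm k ξ)) :
    ‖∫ u, φ₁ u.1 * φ₂ u.2 ∂μ‖ ≤ B₁ * B₂ * M / (2 * Real.pi) * (1 / √(1 - k ^ 2)) := by
  have hB₁ := hφ₁.bound_nonneg
  have hB₂ := hφ₂.bound_nonneg
  have hbound (w : ℝ × ℝ) :
      ‖𝓕 φ₁ w.1 * 𝓕 φ₂ w.2 * planeFourier μ (-(2 * Real.pi) • w)‖ ≤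
        B₁ * B₂ * M * Real.exp (-halfCovForm k (-(2 * Real.pi) • w)) := by
    rw [norm_mul, norm_mul]
    by_cases hw : |2 * Real.pi * w.1| ≤ R ∧ |2 * Real.pi * w.2| ≤ R
    · rw [mul_assoc (B₁ * B₂)]
      gcongr
      · exact hφ₁.norm_fourier_le _
      · exact hφ₂.norm_fourier_le _
      · exact hμ _ (by simpa [abs_mul] using hw.1) (by simpa [abs_mul] using hw.2)
    · have hzero : 𝓕 φ₁ w.1 = 0 ∨ 𝓕 φ₂ w.2 = 0 :=
        (not_and_or.1 hw).imp (fun h => hφ₁.fourier_eq_zero _ (not_le.1 h))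
          fun h => hφ₂.fourier_eq_zero _ (not_le.1 h)
      rw [← norm_mul, mul_eq_zero.2 hzero, norm_zero, zero_mul]
      positivity
  have hgauss : Integrable fun w : ℝ × ℝ => Real.exp (-halfCovForm k (-(2 * Real.pi) • w)) :=
    (integrable_exp_neg_halfCovForm hk).comp_smul (neg_ne_zero.2 Real.two_pi_pos.ne')
  calc ‖∫ u, φ₁ u.1 * φ₂ u.2 ∂μ‖
      = ‖∫ w : ℝ × ℝ, 𝓕 φ₁ w.1 * 𝓕 φ₂ w.2 * planeFourier μ (-(2 * Real.pi) • w)‖ := by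
        rw [← integral_fourierInv_mul_fourierInv hφ₁.integrable_fourier hφ₂.integrable_fourier,
          hφ₁.fourierInv_fourier_eq, hφ₂.fourierInv_fourier_eq]
    _ ≤ ∫ w : ℝ × ℝ, B₁ * B₂ * M * Real.exp (-halfCovForm k (-(2 * Real.pi) • w)) :=
        norm_integral_le_of_norm_le (hgauss.const_mul _) (Eventually.of_forall hbound)
    _ = B₁ * B₂ * M / (2 * Real.pi) * (1 / √(1 - k ^ 2)) := by
        rw [integral_const_mul, integral_exp_neg_halfCovForm_smul hk]
        field_simp

end GaussianMajorant

section Limsup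

variable {ι : Type*} {l : Filter ι} {u κ : ι → ℝ}

lemma limsup_le_of_eventually_le_comp_of_monotoneOn {a b : ℝ} {h : ℝ → ℝ}
    (hu : IsCoboundedUnder (· ≤ ·) l u) (hκ : ∀ᶠ i in l, a ≤ κ i)
    (hκ_bdd : IsBoundedUnder (· ≤ ·) l κ) (hκ_lt : limsup κ l < b)
    (hh : MonotoneOn h (Ico a b)) (hh_cont : ContinuousAt h (limsup κ l))
    (huh : ∀ᶠ i in l, u i ≤ h (κ i)) : limsup u l ≤ h (limsup κ l) := by
  refine ge_of_tendsto (hh_cont.tendsto.mono_left (nhdsWithin_le_nhds (s := Ioi (limsup κ l)))) ?_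
  filter_upwards [Ioo_mem_nhdsGT hκ_lt] with k ⟨hlim_k, hkb⟩
  refine limsup_le_of_le hu ?_
  filter_upwards [hκ, huh, eventually_lt_of_limsup_lt hlim_k hκ_bdd] with i hai hui hik
  exact hui.trans (hh ⟨hai, hik.trans hkb⟩ ⟨hai.trans hik.le, hkb⟩ hik.le)

lemma monotoneOn_one_div_sqrt_one_sub_sq :
    MonotoneOn (fun k : ℝ => 1 / √(1 - k ^ 2)) (Ico 0 1) := by
  intro k hk k' hk' hkk'
  have hpos : 0 < 1 - k' ^ 2 := sub_pos.2 (pow_lt_one₀ hk'.1 hk'.2 two_ne_zero)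
  exact one_div_le_one_div_of_le (Real.sqrt_pos.2 hpos)
    (Real.sqrt_le_sqrt (sub_le_sub_left (pow_le_pow_left₀ hk.1 hkk' 2) 1))

lemma continuousAt_one_div_sqrt_one_sub_sq {k : ℝ} (hk : |k| < 1) :
    ContinuousAt (fun k : ℝ => 1 / √(1 - k ^ 2)) k :=
  continuousAt_const.div (by fun_prop)
    (Real.sqrt_pos.2 (sub_pos.2 ((sq_lt_one_iff_abs_lt_one k).2 hk))).ne'

lemma limsup_norm_integral_mul_le [l.NeBot] {μ : ι → Measure (ℝ × ℝ)} [∀ i, IsFiniteMeasure (μ i)]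
    {φ₁ φ₂ : ι → ℝ → ℂ} {R : ι → ℝ} {B₁ B₂ M : ℝ}
    (hφ₁ : ∀ i, IsBandLimited (φ₁ i) (R i) B₁) (hφ₂ : ∀ i, IsBandLimited (φ₂ i) (R i) B₂)
    (hκ_bdd : IsBoundedUnder (· ≤ ·) l fun i => |κ i|) (hκ_lt : limsup (fun i => |κ i|) l < 1)
    (hM : 0 ≤ M)
    (hμ : ∀ᶠ i in l, ∀ ξ : ℝ × ℝ, |ξ.1| ≤ R i → |ξ.2| ≤ R i →
      ‖planeFourier (μ i) ξ‖ ≤ M * Real.exp (-halfCovForm (κ i) ξ)) :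
    limsup (fun i => ‖∫ u, φ₁ i u.1 * φ₂ i u.2 ∂μ i‖) l ≤
      B₁ * B₂ * M / (2 * Real.pi) * (1 / √(1 - limsup (fun i => |κ i|) l ^ 2)) := by
  obtain ⟨i₀⟩ := l.nonempty_of_neBot
  have hC : 0 ≤ B₁ * B₂ * M / (2 * Real.pi) := by
    have hB₁ := (hφ₁ i₀).bound_nonneg
    have hB₂ := (hφ₂ i₀).bound_nonneg
    positivity
  have hlim_nonneg : 0 ≤ limsup (fun i => |κ i|) l :=
    le_limsup_of_frequently_le (Frequently.of_forall fun i => abs_nonneg _) hκ_bdd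
  refine limsup_le_of_eventually_le_comp_of_monotoneOn
    (h := fun k => B₁ * B₂ * M / (2 * Real.pi) * (1 / √(1 - k ^ 2)))
    (isCoboundedUnder_le_of_le l (x := 0) fun i => norm_nonneg _)
    (Eventually.of_forall fun i => abs_nonneg (κ i)) hκ_bdd hκ_lt
    (fun k hk k' hk' hkk' =>
      mul_le_mul_of_nonneg_left (monotoneOn_one_div_sqrt_one_sub_sq hk hk' hkk') hC)
    ((continuousAt_one_div_sqrt_one_sub_sq (by rwa [abs_of_nonneg hlim_nonneg])).const_mul _) ?_
  filter_upwards [hμ, eventually_lt_of_limsup_lt hκ_lt hκ_bdd] with i hi hκi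
  rw [sq_abs]
  exact norm_integral_mul_le_of_norm_planeFourier_le (hφ₁ i) (hφ₂ i) hκi hM hi

theorem statement5_general [l.NeBot] {μ : ι → Measure (ℝ × ℝ)} [∀ i, IsFiniteMeasure (μ i)]
    (hκ_bdd : IsBoundedUnder (· ≤ ·) l fun i => |κ i|) (hκ_lt : limsup (fun i => |κ i|) l < 1)
    {R : ℝ} {χ : ℝ → ℝ} (hχ : Integrable χ)
    (hχR : ∀ t : ℝ, R < |t| →
      (∫ x : ℝ, (χ x : ℂ) * Complex.exp (-(Complex.I * t * x))) = 0)
    {γ : ℝ} (hγ : 0 < γ) {γ₁ γ₂ : ι → ℝ} (hγ₁ : ∀ i, γ ≤ γ₁ i) (hγ₂ : ∀ i, γ ≤ γ₂ i)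
    {σ : ι → ℝ} (hσ : ∀ i, 0 < σ i)
    {Mχ : ℝ} (hχM : ∀ t : ℝ, ‖∫ x : ℝ, (χ x : ℂ) * Complex.exp (-(Complex.I * t * x))‖ ≤ Mχ)
    {M : ℝ} (hM : 0 ≤ M)
    (hμ : ∀ᶠ i in l, ∀ ξ : ℝ × ℝ, |ξ.1| ≤ R * σ i → |ξ.2| ≤ R * σ i →
      ‖planeFourier (μ i) ξ‖ ≤ M * Real.exp (-halfCovForm (κ i) ξ)) :
    limsup (fun i => |∫ u, σ i ^ 2 * (∫ y, expCutoff (γ₁ i) y * χ (σ i * u.1 - y)) *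
        (∫ y, expCutoff (γ₂ i) y * χ (σ i * u.2 - y)) ∂μ i|) l ≤
      1 / (2 * Real.pi * γ ^ 2) * Mχ ^ 2 *
        (1 / √(1 - limsup (fun i => |κ i|) l ^ 2)) * M := by
  have hφ {a : ℝ} (ha : γ ≤ a) (i : ι) :=
    (isBandLimited_expCutoff_convolution hγ ha hχ hχM hχR).comp_mul_left (hσ i)
  convert! limsup_norm_integral_mul_le (fun i => hφ (hγ₁ i) i) (fun i => hφ (hγ₂ i) i)
    hκ_bdd hκ_lt hM hμ using 1
  · congr 1 with i
    rw [← Real.norm_eq_abs, ← Complex.norm_real, ← integral_complex_ofReal]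
    congr 2 with u
    push_cast
    ring
  · field_simp

end Limsup

/-- Lemma `lem:fzero`: a Fourier-analytic bound. For probability measures
`f_N` on `ℝ²` whose Fourier transforms factor as `F_N(ξ) exp(-(ξ₁²+ξ₂²)/2 - ξ₁ξ₂κ_N)`, a
compactly band-limited mollifier `χ`, exponential cutoffs `φ_j = (e^{-γ_j·}1_{ℝ₊}) ⋆ χ`
and any positive scales `σ_N`, the rescaled integrals satisfy the stated limsup bound,
where the sup norms of `χ̂` and of `F_N` on `[-Rσ_N, Rσ_N]²` are encoded by the bounds
`Mχ` and `MF`. -/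
theorem statement5
    (μ : ℕ → Measure (ℝ × ℝ)) (hμ : ∀ N, IsProbabilityMeasure (μ N))
    (F : ℕ → ℝ × ℝ → ℂ) (κ : ℕ → ℝ) (hκmem : ∀ N, κ N ∈ Set.Icc (0:ℝ) 1)
    (hFourier : ∀ N : ℕ, ∀ ξ₁ ξ₂ : ℝ,
      (∫ u, Complex.exp (-(Complex.I * (ξ₁ * u.1 + ξ₂ * u.2))) ∂(μ N))
        = F N (ξ₁, ξ₂) *
          Complex.exp (-(((ξ₁ ^ 2 + ξ₂ ^ 2) / 2 + ξ₁ * ξ₂ * κ N : ℝ) : ℂ)))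
    (κlim : ℝ) (hκlim : κlim = Filter.limsup κ atTop) (hκlt : κlim < 1)
    (R : ℝ) (hR : 0 < R)
    (χ : ℝ → ℝ) (hχ : Integrable χ)
    (hχhat : ∀ t : ℝ, R < |t| →
      (∫ x : ℝ, (χ x : ℂ) * Complex.exp (-(Complex.I * t * x))) = 0)
    (γ : ℝ) (hγ : 0 < γ) (γ₁ γ₂ : ℕ → ℝ) (hγ₁ : ∀ N, γ < γ₁ N) (hγ₂ : ∀ N, γ < γ₂ N)
    (σ : ℕ → ℝ) (hσ : ∀ N, 0 < σ N)
    (Mχ : ℝ) (hMχ : ∀ t : ℝ, ‖∫ x : ℝ, (χ x : ℂ) * Complex.exp (-(Complex.I * t * x))‖ ≤ Mχ)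
    (MF : ℝ) (hMF : ∀ N : ℕ, 1 ≤ N → ∀ ξ₁ ξ₂ : ℝ,
      |ξ₁| ≤ R * σ N → |ξ₂| ≤ R * σ N → ‖F N (ξ₁, ξ₂)‖ ≤ MF) :
    Filter.limsup (fun N : ℕ =>
        |∫ u, σ N ^ 2 *
            (∫ y : ℝ, (if 0 ≤ y then Real.exp (-(γ₁ N * y)) else 0) * χ (σ N * u.1 - y)) *
            (∫ y : ℝ, (if 0 ≤ y then Real.exp (-(γ₂ N * y)) else 0) * χ (σ N * u.2 - y))
          ∂(μ N)|) atTop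
      ≤ 1 / (2 * Real.pi * γ ^ 2) * Mχ ^ 2 * (1 / Real.sqrt (1 - κlim ^ 2)) * MF := by
  have hRσ_nonneg : 0 ≤ R * σ 1 := (mul_pos hR (hσ 1)).le
  have hMF_nonneg : 0 ≤ MF := (norm_nonneg _).trans <|
    hMF 1 le_rfl 0 0 (by rwa [abs_zero]) (by rwa [abs_zero])
  have hκ_abs : (fun N => |κ N|) = κ := funext fun N => abs_of_nonneg (hκmem N).1
  have hmajorant : ∀ᶠ N in atTop, ∀ ξ : ℝ × ℝ, |ξ.1| ≤ R * σ N → |ξ.2| ≤ R * σ N →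
      ‖planeFourier (μ N) ξ‖ ≤ MF * Real.exp (-halfCovForm (κ N) ξ) := by
    filter_upwards [eventually_ge_atTop 1] with N hN ξ hξ₁ hξ₂
    rw [planeFourier, hFourier, norm_mul, ← Complex.ofReal_neg, Complex.norm_exp_ofReal]
    exact mul_le_mul_of_nonneg_right (hMF N hN _ _ hξ₁ hξ₂) (Real.exp_nonneg _)
  have hκ_bdd : IsBoundedUnder (· ≤ ·) atTop fun N => |κ N| :=
    isBoundedUnder_of ⟨1, fun N => (abs_of_nonneg (hκmem N).1).trans_le (hκmem N).2⟩
  have hlimsup := statement5_general hκ_bdd (by rwa [hκ_abs, ← hκlim]) hχ hχhat hγ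
    (fun N => (hγ₁ N).le) (fun N => (hγ₂ N).le) hσ hMχ hMF_nonneg hmajorant
  rwa [hκ_abs, ← hκlim] at hlimsup

end
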